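/- Every proof in LK with only propositional (quantifier-free) cuts of a sequent S can be transformed into a cut-free LK-proof of S whose size is at most double exponential in the size of the original proof. -/

import Mathlib

namespace EpsCalc

/-! ## Syntax: terms and formulas of first-order logic extended by epsilon terms.
We use a locally nameless representation: `bvar` are de Bruijn indices for bound
variables (bound by `all`, `ex`, or `eps`), `fvar` are named free variables. -/

mutual
inductive Tm : Type where
  | bvar : ℕ → Tm
  | fvar : ℕ → Tm
  | func : ℕ → Tms → Tm
  | eps  : Fm → Tm          -- the epsilon term ε_x A(x)

inductive Tms : Type where
  | nil  : Tms
  | cons : Tm → Tms → Tms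

inductive Fm : Type where
  | atom : ℕ → Tms → Fm
  | and  : Fm → Fm → Fm
  | or   : Fm → Fm → Fm
  | imp  : Fm → Fm → Fm
  | not  : Fm → Fm
  | all  : Fm → Fm          -- ∀ binding de Bruijn index 0
  | ex   : Fm → Fm          -- ∃ binding de Bruijn index 0
end

/-! lifting of bound variables (shift indices ≥ k by one) -/
mutual
def liftT (k : ℕ) : Tm → Tm
  | .bvar n => if n < k then .bvar n else .bvar (n+1)
  | .fvar a => .fvar a
  | .func f ts => .func f (liftTs k ts)
  | .eps A => .eps (liftF (k+1) A)
def liftTs (k : ℕ) : Tms → Tms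
  | .nil => .nil
  | .cons t ts => .cons (liftT k t) (liftTs k ts)
def liftF (k : ℕ) : Fm → Fm
  | .atom p ts => .atom p (liftTs k ts)
  | .and A B => .and (liftF k A) (liftF k B)
  | .or A B => .or (liftF k A) (liftF k B)
  | .imp A B => .imp (liftF k A) (liftF k B)
  | .not A => .not (liftF k A)
  | .all A => .all (liftF (k+1) A)
  | .ex A => .ex (liftF (k+1) A)
end

/-! substitution of a term for the bound variable k -/
mutual
def subT (k : ℕ) (u : Tm) : Tm → Tm
  | .bvar n => if n = k then u else if n < k then .bvar n else .bvar (n-1)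
  | .fvar a => .fvar a
  | .func f ts => .func f (subTs k u ts)
  | .eps A => .eps (subF (k+1) (liftT 0 u) A)
def subTs (k : ℕ) (u : Tm) : Tms → Tms
  | .nil => .nil
  | .cons t ts => .cons (subT k u t) (subTs k u ts)
def subF (k : ℕ) (u : Tm) : Fm → Fm
  | .atom p ts => .atom p (subTs k u ts)
  | .and A B => .and (subF k u A) (subF k u B)
  | .or A B => .or (subF k u A) (subF k u B)
  | .imp A B => .imp (subF k u A) (subF k u B)
  | .not A => .not (subF k u A)
  | .all A => .all (subF (k+1) (liftT 0 u) A)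
  | .ex A => .ex (subF (k+1) (liftT 0 u) A)
end

/-- instantiate the outermost bound variable of `A` with the term `t`:  A(t) -/
def inst0 (A : Fm) (t : Tm) : Fm := subF 0 t A

/-! substitution of a term for a *free* variable -/
mutual
def sfvT (a : ℕ) (u : Tm) : Tm → Tm
  | .bvar n => .bvar n
  | .fvar b => if b = a then u else .fvar b
  | .func f ts => .func f (sfvTs a u ts)
  | .eps A => .eps (sfvF a (liftT 0 u) A)
def sfvTs (a : ℕ) (u : Tm) : Tms → Tms
  | .nil => .nil
  | .cons t ts => .cons (sfvT a u t) (sfvTs a u ts)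
def sfvF (a : ℕ) (u : Tm) : Fm → Fm
  | .atom p ts => .atom p (sfvTs a u ts)
  | .and A B => .and (sfvF a u A) (sfvF a u B)
  | .or A B => .or (sfvF a u A) (sfvF a u B)
  | .imp A B => .imp (sfvF a u A) (sfvF a u B)
  | .not A => .not (sfvF a u A)
  | .all A => .all (sfvF a (liftT 0 u) A)
  | .ex A => .ex (sfvF a (liftT 0 u) A)
end

/-! abstraction of a free variable into a bound variable (for universal closure) -/
mutual
def abT (a k : ℕ) : Tm → Tm
  | .bvar n => .bvar n
  | .fvar b => if b = a then .bvar k else .fvar b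
  | .func f ts => .func f (abTs a k ts)
  | .eps A => .eps (abF a (k+1) A)
def abTs (a k : ℕ) : Tms → Tms
  | .nil => .nil
  | .cons t ts => .cons (abT a k t) (abTs a k ts)
def abF (a k : ℕ) : Fm → Fm
  | .atom p ts => .atom p (abTs a k ts)
  | .and A B => .and (abF a k A) (abF a k B)
  | .or A B => .or (abF a k A) (abF a k B)
  | .imp A B => .imp (abF a k A) (abF a k B)
  | .not A => .not (abF a k A)
  | .all A => .all (abF a (k+1) A)
  | .ex A => .ex (abF a (k+1) A)
end

/-! free variables -/
mutual
def fvT : Tm → List ℕ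
  | .bvar _ => []
  | .fvar a => [a]
  | .func _ ts => fvTs ts
  | .eps A => fvF A
def fvTs : Tms → List ℕ
  | .nil => []
  | .cons t ts => fvT t ++ fvTs ts
def fvF : Fm → List ℕ
  | .atom _ ts => fvTs ts
  | .and A B => fvF A ++ fvF B
  | .or A B => fvF A ++ fvF B
  | .imp A B => fvF A ++ fvF B
  | .not A => fvF A
  | .all A => fvF A
  | .ex A => fvF A
end

/-! function symbols occurring in an expression -/
mutual
def fsT : Tm → List ℕ
  | .bvar _ => []
  | .fvar _ => []
  | .func f ts => f :: fsTs ts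
  | .eps A => fsF A
def fsTs : Tms → List ℕ
  | .nil => []
  | .cons t ts => fsT t ++ fsTs ts
def fsF : Fm → List ℕ
  | .atom _ ts => fsTs ts
  | .and A B => fsF A ++ fsF B
  | .or A B => fsF A ++ fsF B
  | .imp A B => fsF A ++ fsF B
  | .not A => fsF A
  | .all A => fsF A
  | .ex A => fsF A
end

/-! number of symbols (size) -/
mutual
def szT : Tm → ℕ
  | .bvar _ => 1
  | .fvar _ => 1
  | .func _ ts => 1 + szTs ts
  | .eps A => 1 + szF A
def szTs : Tms → ℕ
  | .nil => 0
  | .cons t ts => szT t + szTs ts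
def szF : Fm → ℕ
  | .atom _ ts => 1 + szTs ts
  | .and A B => 1 + szF A + szF B
  | .or A B => 1 + szF A + szF B
  | .imp A B => 1 + szF A + szF B
  | .not A => 1 + szF A
  | .all A => 1 + szF A
  | .ex A => 1 + szF A
end

/-! epsilon-freeness (first-order language) and quantifier-freeness (epsilon language) -/
mutual
def noEpsT : Tm → Bool
  | .bvar _ => true
  | .fvar _ => true
  | .func _ ts => noEpsTs ts
  | .eps _ => false
def noEpsTs : Tms → Bool
  | .nil => true
  | .cons t ts => noEpsT t && noEpsTs ts
def noEpsF : Fm → Bool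
  | .atom _ ts => noEpsTs ts
  | .and A B => noEpsF A && noEpsF B
  | .or A B => noEpsF A && noEpsF B
  | .imp A B => noEpsF A && noEpsF B
  | .not A => noEpsF A
  | .all A => noEpsF A
  | .ex A => noEpsF A
end

/-- `A` is a formula of the first-order language: it contains no epsilon terms. -/
def isFO (A : Fm) : Bool := noEpsF A

/-- quantifier-freeness: `A` belongs to the language of the epsilon calculus
(propositional language over epsilon terms) iff `qfree A`. -/
def qfree : Fm → Bool
  | .atom _ _ => true
  | .and A B => qfree A && qfree B
  | .or A B => qfree A && qfree B
  | .imp A B => qfree A && qfree B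
  | .not A => qfree A
  | .all _ => false
  | .ex _ => false

/-- The epsilon translation [A]^ε of a formula. -/
def epsT : Fm → Fm
  | .atom p ts => .atom p ts
  | .and A B => .and (epsT A) (epsT B)
  | .or A B => .or (epsT A) (epsT B)
  | .imp A B => .imp (epsT A) (epsT B)
  | .not A => .not (epsT A)
  | .ex A => inst0 (epsT A) (.eps (epsT A))
  | .all A => inst0 (epsT A) (.eps (.not (epsT A)))

/-! ## The matrix A^M of a formula: delete all quantifiers and replace the
variables bound by them by fresh free variables. -/
mutual
def mxT (b d : ℕ) : Tm → Tm
  | .bvar n => if n < d then .fvar (b + (d - 1 - n)) else .bvar (n - d)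
  | .fvar a => .fvar a
  | .func f ts => .func f (mxTs b d ts)
  | .eps A => .eps A          -- (the matrix is only used on epsilon-free formulas)
def mxTs (b d : ℕ) : Tms → Tms
  | .nil => .nil
  | .cons t ts => .cons (mxT b d t) (mxTs b d ts)
def mxF (b d : ℕ) : Fm → Fm
  | .atom p ts => .atom p (mxTs b d ts)
  | .and A B => .and (mxF b d A) (mxF b d B)
  | .or A B => .or (mxF b d A) (mxF b d B)
  | .imp A B => .imp (mxF b d A) (mxF b d B)
  | .not A => .not (mxF b d A)
  | .all A => mxF b (d+1) A
  | .ex A => mxF b (d+1) A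
end

def maxFv (A : Fm) : ℕ := (fvF A).foldr max 0

/-- the matrix A^M of A -/
def matrix (A : Fm) : Fm := mxF (maxFv A + 1) 0 A

/-- universal closure ∀x̄ A over all free variables of A -/
def uclose (A : Fm) : Fm :=
  ((fvF A).dedup).foldr (fun a B => Fm.all (abF a 0 B)) A

/-! ## Weak/strong quantifier occurrences.
`posW A` : all quantifier occurrences of `A` are weak when `A` occurs in the
succedent; `negW A` : likewise for the antecedent. -/
mutual
def posW : Fm → Bool
  | .atom _ _ => true
  | .and A B => posW A && posW B
  | .or A B => posW A && posW B
  | .imp A B => negW A && posW B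
  | .not A => negW A
  | .all _ => false
  | .ex A => posW A
def negW : Fm → Bool
  | .atom _ _ => true
  | .and A B => negW A && negW B
  | .or A B => negW A && negW B
  | .imp A B => posW A && negW B
  | .not A => posW A
  | .all A => negW A
  | .ex _ => false
end

/-- the sequent Γ ⊢ Δ contains weak quantifier occurrences only -/
def WeakSeq (Γ Δ : List Fm) : Prop :=
  (∀ A ∈ Γ, negW A = true) ∧ (∀ A ∈ Δ, posW A = true)

/-- the sequent Γ ⊢ Δ is in the first-order language -/
def FOSeq (Γ Δ : List Fm) : Prop :=
  (∀ A ∈ Γ, isFO A = true) ∧ (∀ A ∈ Δ, isFO A = true)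

/-- the sequent Γ ⊢ Δ is in the language of the epsilon calculus -/
def EpsSeq (Γ Δ : List Fm) : Prop :=
  (∀ A ∈ Γ, qfree A = true) ∧ (∀ A ∈ Δ, qfree A = true)

def fvSeq (Γ Δ : List Fm) : List ℕ :=
  (Γ ++ Δ).foldr (fun A l => fvF A ++ l) []

def fsSeq (Γ Δ : List Fm) : List ℕ :=
  (Γ ++ Δ).foldr (fun A l => fsF A ++ l) []

def seqSize (Γ Δ : List Fm) : ℕ :=
  (Γ ++ Δ).foldr (fun A n => szF A + n) 0


/-! ## LK derivation trees.
`Deriv Γ Δ` are derivation trees of the sequent Γ ⊢ Δ built from the rules of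
Gentzen's LK, where the strong quantifier rules `allR`/`exL` carry an
eigenvariable but *no* correctness condition; the various eigenvariable
disciplines (LK, LK⁺, LK⁺⁺) are imposed as predicates on the trees below. -/
inductive Deriv : List Fm → List Fm → Type where
  | ax (A : Fm) : Deriv [A] [A]
  | andL (A B : Fm) (Γ Δ : List Fm) :
      Deriv (A :: B :: Γ) Δ → Deriv (Fm.and A B :: Γ) Δ
  | andR (A B : Fm) (Γ₁ Δ₁ Γ₂ Δ₂ : List Fm) :
      Deriv Γ₁ (A :: Δ₁) → Deriv Γ₂ (B :: Δ₂) →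
      Deriv (Γ₁ ++ Γ₂) (Fm.and A B :: (Δ₁ ++ Δ₂))
  | orL (A B : Fm) (Γ₁ Δ₁ Γ₂ Δ₂ : List Fm) :
      Deriv (A :: Γ₁) Δ₁ → Deriv (B :: Γ₂) Δ₂ →
      Deriv (Fm.or A B :: (Γ₁ ++ Γ₂)) (Δ₁ ++ Δ₂)
  | orR (A B : Fm) (Γ Δ : List Fm) :
      Deriv Γ (A :: B :: Δ) → Deriv Γ (Fm.or A B :: Δ)
  | impL (A B : Fm) (Γ₁ Δ₁ Γ₂ Δ₂ : List Fm) :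
      Deriv Γ₁ (A :: Δ₁) → Deriv (B :: Γ₂) Δ₂ →
      Deriv (Fm.imp A B :: (Γ₁ ++ Γ₂)) (Δ₁ ++ Δ₂)
  | impR (A B : Fm) (Γ Δ : List Fm) :
      Deriv (A :: Γ) (B :: Δ) → Deriv Γ (Fm.imp A B :: Δ)
  | notL (A : Fm) (Γ Δ : List Fm) :
      Deriv Γ (A :: Δ) → Deriv (Fm.not A :: Γ) Δ
  | notR (A : Fm) (Γ Δ : List Fm) :
      Deriv (A :: Γ) Δ → Deriv Γ (Fm.not A :: Δ)
  | wL (A : Fm) (Γ Δ : List Fm) : Deriv Γ Δ → Deriv (A :: Γ) Δ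
  | wR (A : Fm) (Γ Δ : List Fm) : Deriv Γ Δ → Deriv Γ (A :: Δ)
  | cL (A : Fm) (Γ Δ : List Fm) : Deriv (A :: A :: Γ) Δ → Deriv (A :: Γ) Δ
  | cR (A : Fm) (Γ Δ : List Fm) : Deriv Γ (A :: A :: Δ) → Deriv Γ (A :: Δ)
  | cut (A : Fm) (Γ₁ Δ₁ Γ₂ Δ₂ : List Fm) :
      Deriv Γ₁ (A :: Δ₁) → Deriv (A :: Γ₂) Δ₂ →
      Deriv (Γ₁ ++ Γ₂) (Δ₁ ++ Δ₂)
  | allL (t : Tm) (A : Fm) (Γ Δ : List Fm) :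
      Deriv (inst0 A t :: Γ) Δ → Deriv (Fm.all A :: Γ) Δ
  | allR (a : ℕ) (A : Fm) (Γ Δ : List Fm) :
      Deriv Γ (inst0 A (Tm.fvar a) :: Δ) → Deriv Γ (Fm.all A :: Δ)
  | exL (a : ℕ) (A : Fm) (Γ Δ : List Fm) :
      Deriv (inst0 A (Tm.fvar a) :: Γ) Δ → Deriv (Fm.ex A :: Γ) Δ
  | exR (t : Tm) (A : Fm) (Γ Δ : List Fm) :
      Deriv Γ (inst0 A t :: Δ) → Deriv Γ (Fm.ex A :: Δ)
  | permL (Γ Γ' Δ : List Fm) : Γ.Perm Γ' → Deriv Γ Δ → Deriv Γ' Δ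
  | permR (Γ Δ Δ' : List Fm) : Δ.Perm Δ' → Deriv Γ Δ → Deriv Γ Δ'

namespace Deriv

/-- the size of a derivation: the number of inference steps occurring in it -/
def size : ∀ {Γ Δ}, Deriv Γ Δ → ℕ
  | _, _, ax _ => 1
  | _, _, andL _ _ _ _ d => d.size + 1
  | _, _, andR _ _ _ _ _ _ d e => d.size + e.size + 1
  | _, _, orL _ _ _ _ _ _ d e => d.size + e.size + 1
  | _, _, orR _ _ _ _ d => d.size + 1
  | _, _, impL _ _ _ _ _ _ d e => d.size + e.size + 1
  | _, _, impR _ _ _ _ d => d.size + 1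
  | _, _, notL _ _ _ d => d.size + 1
  | _, _, notR _ _ _ d => d.size + 1
  | _, _, wL _ _ _ d => d.size + 1
  | _, _, wR _ _ _ d => d.size + 1
  | _, _, cL _ _ _ d => d.size + 1
  | _, _, cR _ _ _ d => d.size + 1
  | _, _, cut _ _ _ _ _ d e => d.size + e.size + 1
  | _, _, allL _ _ _ _ d => d.size + 1
  | _, _, allR _ _ _ _ d => d.size + 1
  | _, _, exL _ _ _ _ d => d.size + 1
  | _, _, exR _ _ _ _ d => d.size + 1
  | _, _, permL _ _ _ _ d => d.size + 1
  | _, _, permR _ _ _ _ d => d.size + 1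

/-- the list of cut formulas occurring in a derivation -/
def cutFms : ∀ {Γ Δ}, Deriv Γ Δ → List Fm
  | _, _, ax _ => []
  | _, _, andL _ _ _ _ d => d.cutFms
  | _, _, andR _ _ _ _ _ _ d e => d.cutFms ++ e.cutFms
  | _, _, orL _ _ _ _ _ _ d e => d.cutFms ++ e.cutFms
  | _, _, orR _ _ _ _ d => d.cutFms
  | _, _, impL _ _ _ _ _ _ d e => d.cutFms ++ e.cutFms
  | _, _, impR _ _ _ _ d => d.cutFms
  | _, _, notL _ _ _ d => d.cutFms
  | _, _, notR _ _ _ d => d.cutFms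
  | _, _, wL _ _ _ d => d.cutFms
  | _, _, wR _ _ _ d => d.cutFms
  | _, _, cL _ _ _ d => d.cutFms
  | _, _, cR _ _ _ d => d.cutFms
  | _, _, cut A _ _ _ _ d e => A :: (d.cutFms ++ e.cutFms)
  | _, _, allL _ _ _ _ d => d.cutFms
  | _, _, allR _ _ _ _ d => d.cutFms
  | _, _, exL _ _ _ _ d => d.cutFms
  | _, _, exR _ _ _ _ d => d.cutFms
  | _, _, permL _ _ _ _ d => d.cutFms
  | _, _, permR _ _ _ _ d => d.cutFms

/-- data of the strong quantifier inferences of a derivation: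
(eigenvariable, auxiliary formula, main formula) -/
def strongs : ∀ {Γ Δ}, Deriv Γ Δ → List (ℕ × Fm × Fm)
  | _, _, ax _ => []
  | _, _, andL _ _ _ _ d => d.strongs
  | _, _, andR _ _ _ _ _ _ d e => d.strongs ++ e.strongs
  | _, _, orL _ _ _ _ _ _ d e => d.strongs ++ e.strongs
  | _, _, orR _ _ _ _ d => d.strongs
  | _, _, impL _ _ _ _ _ _ d e => d.strongs ++ e.strongs
  | _, _, impR _ _ _ _ d => d.strongs
  | _, _, notL _ _ _ d => d.strongs
  | _, _, notR _ _ _ d => d.strongs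
  | _, _, wL _ _ _ d => d.strongs
  | _, _, wR _ _ _ d => d.strongs
  | _, _, cL _ _ _ d => d.strongs
  | _, _, cR _ _ _ d => d.strongs
  | _, _, cut _ _ _ _ _ d e => d.strongs ++ e.strongs
  | _, _, allL _ _ _ _ d => d.strongs
  | _, _, allR a A _ _ d => (a, inst0 A (Tm.fvar a), Fm.all A) :: d.strongs
  | _, _, exL a A _ _ d => (a, inst0 A (Tm.fvar a), Fm.ex A) :: d.strongs
  | _, _, exR _ _ _ _ d => d.strongs
  | _, _, permL _ _ _ _ d => d.strongs
  | _, _, permR _ _ _ _ d => d.strongs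

/-- the standard (local) eigenvariable conditions of LK: the eigenvariable of a
strong quantifier inference does not occur free in its conclusion -/
def Std : ∀ {Γ Δ}, Deriv Γ Δ → Prop
  | _, _, ax _ => True
  | _, _, andL _ _ _ _ d => d.Std
  | _, _, andR _ _ _ _ _ _ d e => d.Std ∧ e.Std
  | _, _, orL _ _ _ _ _ _ d e => d.Std ∧ e.Std
  | _, _, orR _ _ _ _ d => d.Std
  | _, _, impL _ _ _ _ _ _ d e => d.Std ∧ e.Std
  | _, _, impR _ _ _ _ d => d.Std
  | _, _, notL _ _ _ d => d.Std
  | _, _, notR _ _ _ d => d.Std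
  | _, _, wL _ _ _ d => d.Std
  | _, _, wR _ _ _ d => d.Std
  | _, _, cL _ _ _ d => d.Std
  | _, _, cR _ _ _ d => d.Std
  | _, _, cut _ _ _ _ _ d e => d.Std ∧ e.Std
  | _, _, allL _ _ _ _ d => d.Std
  | _, _, allR a A Γ Δ d => a ∉ fvSeq Γ (Fm.all A :: Δ) ∧ d.Std
  | _, _, exL a A Γ Δ d => a ∉ fvSeq (Fm.ex A :: Γ) Δ ∧ d.Std
  | _, _, exR _ _ _ _ d => d.Std
  | _, _, permL _ _ _ _ d => d.Std
  | _, _, permR _ _ _ _ d => d.Std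

end Deriv

/-- the side variable relation `<_φ`: `b` is a side variable of `a` in `φ` if `φ`
contains a strong quantifier inference with eigenvariable `a` whose auxiliary
formula contains the free variable `b` -/
def sideRel {Γ Δ} (d : Deriv Γ Δ) (a b : ℕ) : Prop :=
  ∃ e ∈ d.strongs, e.1 = a ∧ b ∈ fvF e.2.1 ∧ b ≠ a

/-- acyclicity of a binary relation -/
def Acyc (r : ℕ → ℕ → Prop) : Prop := ∀ x, ¬ Relation.TransGen r x x

/-- LK⁺-suitability of (all strong quantifier inferences of) a derivation:
substitutability, the side variable condition, and weak regularity. -/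
def SuitP {Γ Δ} (d : Deriv Γ Δ) : Prop :=
  (∀ e ∈ d.strongs, e.1 ∉ fvSeq Γ Δ) ∧
  Acyc (sideRel d) ∧
  (d.strongs.map (·.1)).Nodup

/-- LK⁺⁺-suitability: substitutability, the side variable condition, and very
weak regularity (equal eigenvariables only for equal main formulas). -/
def SuitPP {Γ Δ} (d : Deriv Γ Δ) : Prop :=
  (∀ e ∈ d.strongs, e.1 ∉ fvSeq Γ Δ) ∧
  Acyc (sideRel d) ∧
  (∀ e₁ ∈ d.strongs, ∀ e₂ ∈ d.strongs, e₁.1 = e₂.1 → e₁.2.2 = e₂.2.2)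

/-! ## The sequent calculus Lε of the epsilon calculus:
atomic axioms, the propositional, structural and cut rules of LK, the weak
quantifier rules ∃_r and ∀_l producing epsilon terms, and a substitution rule
replacing the strong quantifier inferences. -/
inductive EDeriv : List Fm → List Fm → Type where
  | ax (p : ℕ) (ts : Tms) : EDeriv [Fm.atom p ts] [Fm.atom p ts]
  | andL (A B : Fm) (Γ Δ : List Fm) :
      EDeriv (A :: B :: Γ) Δ → EDeriv (Fm.and A B :: Γ) Δ
  | andR (A B : Fm) (Γ₁ Δ₁ Γ₂ Δ₂ : List Fm) :
      EDeriv Γ₁ (A :: Δ₁) → EDeriv Γ₂ (B :: Δ₂) →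
      EDeriv (Γ₁ ++ Γ₂) (Fm.and A B :: (Δ₁ ++ Δ₂))
  | orL (A B : Fm) (Γ₁ Δ₁ Γ₂ Δ₂ : List Fm) :
      EDeriv (A :: Γ₁) Δ₁ → EDeriv (B :: Γ₂) Δ₂ →
      EDeriv (Fm.or A B :: (Γ₁ ++ Γ₂)) (Δ₁ ++ Δ₂)
  | orR (A B : Fm) (Γ Δ : List Fm) :
      EDeriv Γ (A :: B :: Δ) → EDeriv Γ (Fm.or A B :: Δ)
  | impL (A B : Fm) (Γ₁ Δ₁ Γ₂ Δ₂ : List Fm) :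
      EDeriv Γ₁ (A :: Δ₁) → EDeriv (B :: Γ₂) Δ₂ →
      EDeriv (Fm.imp A B :: (Γ₁ ++ Γ₂)) (Δ₁ ++ Δ₂)
  | impR (A B : Fm) (Γ Δ : List Fm) :
      EDeriv (A :: Γ) (B :: Δ) → EDeriv Γ (Fm.imp A B :: Δ)
  | notL (A : Fm) (Γ Δ : List Fm) :
      EDeriv Γ (A :: Δ) → EDeriv (Fm.not A :: Γ) Δ
  | notR (A : Fm) (Γ Δ : List Fm) :
      EDeriv (A :: Γ) Δ → EDeriv Γ (Fm.not A :: Δ)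
  | wL (A : Fm) (Γ Δ : List Fm) : EDeriv Γ Δ → EDeriv (A :: Γ) Δ
  | wR (A : Fm) (Γ Δ : List Fm) : EDeriv Γ Δ → EDeriv Γ (A :: Δ)
  | cL (A : Fm) (Γ Δ : List Fm) : EDeriv (A :: A :: Γ) Δ → EDeriv (A :: Γ) Δ
  | cR (A : Fm) (Γ Δ : List Fm) : EDeriv Γ (A :: A :: Δ) → EDeriv Γ (A :: Δ)
  | cut (A : Fm) (Γ₁ Δ₁ Γ₂ Δ₂ : List Fm) :
      EDeriv Γ₁ (A :: Δ₁) → EDeriv (A :: Γ₂) Δ₂ →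
      EDeriv (Γ₁ ++ Γ₂) (Δ₁ ++ Δ₂)
  | allL (t : Tm) (A : Fm) (Γ Δ : List Fm) :
      EDeriv (inst0 A t :: Γ) Δ →
      EDeriv (inst0 A (Tm.eps (Fm.not A)) :: Γ) Δ
  | exR (t : Tm) (A : Fm) (Γ Δ : List Fm) :
      EDeriv Γ (inst0 A t :: Δ) →
      EDeriv Γ (inst0 A (Tm.eps A) :: Δ)
  | subst (a : ℕ) (t : Tm) (Γ Δ : List Fm) :
      EDeriv Γ Δ → EDeriv (Γ.map (sfvF a t)) (Δ.map (sfvF a t))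
  | permL (Γ Γ' Δ : List Fm) : Γ.Perm Γ' → EDeriv Γ Δ → EDeriv Γ' Δ
  | permR (Γ Δ Δ' : List Fm) : Δ.Perm Δ' → EDeriv Γ Δ → EDeriv Γ Δ'

namespace EDeriv

/-- the size of an Lε derivation -/
def size : ∀ {Γ Δ}, EDeriv Γ Δ → ℕ
  | _, _, ax _ _ => 1
  | _, _, andL _ _ _ _ d => d.size + 1
  | _, _, andR _ _ _ _ _ _ d e => d.size + e.size + 1
  | _, _, orL _ _ _ _ _ _ d e => d.size + e.size + 1
  | _, _, orR _ _ _ _ d => d.size + 1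
  | _, _, impL _ _ _ _ _ _ d e => d.size + e.size + 1
  | _, _, impR _ _ _ _ d => d.size + 1
  | _, _, notL _ _ _ d => d.size + 1
  | _, _, notR _ _ _ d => d.size + 1
  | _, _, wL _ _ _ d => d.size + 1
  | _, _, wR _ _ _ d => d.size + 1
  | _, _, cL _ _ _ d => d.size + 1
  | _, _, cR _ _ _ d => d.size + 1
  | _, _, cut _ _ _ _ _ d e => d.size + e.size + 1
  | _, _, allL _ _ _ _ d => d.size + 1
  | _, _, exR _ _ _ _ d => d.size + 1
  | _, _, subst _ _ _ _ d => d.size + 1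
  | _, _, permL _ _ _ _ d => d.size + 1
  | _, _, permR _ _ _ _ d => d.size + 1

/-- the list of cut formulas occurring in an Lε derivation -/
def cutFms : ∀ {Γ Δ}, EDeriv Γ Δ → List Fm
  | _, _, ax _ _ => []
  | _, _, andL _ _ _ _ d => d.cutFms
  | _, _, andR _ _ _ _ _ _ d e => d.cutFms ++ e.cutFms
  | _, _, orL _ _ _ _ _ _ d e => d.cutFms ++ e.cutFms
  | _, _, orR _ _ _ _ d => d.cutFms
  | _, _, impL _ _ _ _ _ _ d e => d.cutFms ++ e.cutFms
  | _, _, impR _ _ _ _ d => d.cutFms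
  | _, _, notL _ _ _ d => d.cutFms
  | _, _, notR _ _ _ d => d.cutFms
  | _, _, wL _ _ _ d => d.cutFms
  | _, _, wR _ _ _ d => d.cutFms
  | _, _, cL _ _ _ d => d.cutFms
  | _, _, cR _ _ _ d => d.cutFms
  | _, _, cut A _ _ _ _ d e => A :: (d.cutFms ++ e.cutFms)
  | _, _, allL _ _ _ _ d => d.cutFms
  | _, _, exR _ _ _ _ d => d.cutFms
  | _, _, subst _ _ _ _ d => d.cutFms
  | _, _, permL _ _ _ _ d => d.cutFms
  | _, _, permR _ _ _ _ d => d.cutFms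

end EDeriv

/-! ## Elementary functions and polynomial bounds -/

/-- `iterExp k n` is the `k`-fold iterated exponential 2^2^...^n. -/
def iterExp : ℕ → ℕ → ℕ
  | 0, n => n
  | k+1, n => 2 ^ iterExp k n

/-- A function ℕ → ℕ is elementary (in the sense of Kalmár: definable by a
quantifier-free formula from +, ×, and x ↦ 2^x) iff it is majorized by some
fixed iterated exponential; we use this growth-rate characterization. -/
def IsElementary (f : ℕ → ℕ) : Prop := ∃ k, ∀ n, f n ≤ iterExp k n

/-- `g` is polynomially bounded -/
def PolyBdd (g : ℕ → ℕ) : Prop := ∃ p : Polynomial ℕ, ∀ n, g n ≤ p.eval n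

/-! ## Skolemization (relationally): `SkP F A B` (`SkN F A B`) holds if `B` is
obtained from `A`, occurring in the succedent (antecedent), by replacing the
strong quantifiers by terms built from fresh function symbols in `F`. -/
mutual
inductive SkP (F : ℕ → Prop) : Fm → Fm → Prop where
  | atom (p ts) : SkP F (Fm.atom p ts) (Fm.atom p ts)
  | and {A A' B B'} : SkP F A A' → SkP F B B' → SkP F (Fm.and A B) (Fm.and A' B')
  | or {A A' B B'} : SkP F A A' → SkP F B B' → SkP F (Fm.or A B) (Fm.or A' B')
  | imp {A A' B B'} : SkN F A A' → SkP F B B' → SkP F (Fm.imp A B) (Fm.imp A' B')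
  | not {A A'} : SkN F A A' → SkP F (Fm.not A) (Fm.not A')
  | ex {A A'} : SkP F A A' → SkP F (Fm.ex A) (Fm.ex A')
  | all {A B} (f : ℕ) (ts : Tms) : F f →
      SkP F (inst0 A (Tm.func f ts)) B → SkP F (Fm.all A) B
inductive SkN (F : ℕ → Prop) : Fm → Fm → Prop where
  | atom (p ts) : SkN F (Fm.atom p ts) (Fm.atom p ts)
  | and {A A' B B'} : SkN F A A' → SkN F B B' → SkN F (Fm.and A B) (Fm.and A' B')
  | or {A A' B B'} : SkN F A A' → SkN F B B' → SkN F (Fm.or A B) (Fm.or A' B')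
  | imp {A A' B B'} : SkP F A A' → SkN F B B' → SkN F (Fm.imp A B) (Fm.imp A' B')
  | not {A A'} : SkP F A A' → SkN F (Fm.not A) (Fm.not A')
  | all {A A'} : SkN F A A' → SkN F (Fm.all A) (Fm.all A')
  | ex {A B} (f : ℕ) (ts : Tms) : F f →
      SkN F (inst0 A (Tm.func f ts)) B → SkN F (Fm.ex A) B
end

/-- `S'` is a Skolemization of the sequent `S` using fresh function symbols from `F` -/
def SkolemSeq (F : ℕ → Prop) (S S' : List Fm × List Fm) : Prop :=
  List.Forall₂ (SkN F) S.1 S'.1 ∧ List.Forall₂ (SkP F) S.2 S'.2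



/-!
Read the given derivation `d` bottom-up as a strategy for building a cut-free tableau. The tableau
branch is only required to contain the quantified formulas of the current sequent of `d`: an
inference with quantified principal formula is copied, with a fresh eigenvariable, while an
inference with quantifier-free principal formula, or a cut, adds nothing to the branch. Such a
branching is instead simulated by running one premise after the other, and one merely records the
principal formula. At the end of a run no valuation that respects the connectives of the recorded
formulas can satisfy the branch, so that decomposing the recorded formulas, largest first, closes
it. Both phases at most double the tableau per inference of `d`. Recording formulas matters because
axioms `A ⊢ A` are not atomic: the cut formulas may be much larger than `d`.
-/

/-! ### Renaming of free variables -/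

mutual
/-- Simultaneous renaming of the free variables of a term along `ρ`; it is used to move the
eigenvariables of a derivation out of the way. -/
def renT (ρ : ℕ → ℕ) : Tm → Tm
  | .bvar n => .bvar n
  | .fvar a => .fvar (ρ a)
  | .func f ts => .func f (renTs ρ ts)
  | .eps A => .eps (renF ρ A)
/-- Simultaneous renaming of the free variables of a list of terms. -/
def renTs (ρ : ℕ → ℕ) : Tms → Tms
  | .nil => .nil
  | .cons t ts => .cons (renT ρ t) (renTs ρ ts)
/-- Simultaneous renaming of the free variables of a formula. -/
def renF (ρ : ℕ → ℕ) : Fm → Fm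
  | .atom p ts => .atom p (renTs ρ ts)
  | .and A B => .and (renF ρ A) (renF ρ B)
  | .or A B => .or (renF ρ A) (renF ρ B)
  | .imp A B => .imp (renF ρ A) (renF ρ B)
  | .not A => .not (renF ρ A)
  | .all A => .all (renF ρ A)
  | .ex A => .ex (renF ρ A)
end

section Renaming

variable (ρ σ : ℕ → ℕ)

mutual
theorem renT_liftT (k : ℕ) : ∀ t, renT ρ (liftT k t) = liftT k (renT ρ t)
  | .bvar n => by simp only [liftT, renT]; split <;> simp only [renT]
  | .fvar a => by simp only [liftT, renT]
  | .func f ts => by simp only [liftT, renT, renTs_liftTs k ts]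
  | .eps A => by simp only [liftT, renT, renF_liftF (k + 1) A]
theorem renTs_liftTs (k : ℕ) : ∀ ts, renTs ρ (liftTs k ts) = liftTs k (renTs ρ ts)
  | .nil => by simp only [liftTs, renTs]
  | .cons t ts => by simp only [liftTs, renTs, renT_liftT k t, renTs_liftTs k ts]
theorem renF_liftF (k : ℕ) : ∀ A, renF ρ (liftF k A) = liftF k (renF ρ A)
  | .atom p ts => by simp only [liftF, renF, renTs_liftTs k ts]
  | .and A B | .or A B | .imp A B => by simp only [liftF, renF, renF_liftF k A, renF_liftF k B]
  | .not A => by simp only [liftF, renF, renF_liftF k A]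
  | .all A | .ex A => by simp only [liftF, renF, renF_liftF (k + 1) A]
end

mutual
theorem renT_subT (k : ℕ) (u : Tm) : ∀ t, renT ρ (subT k u t) = subT k (renT ρ u) (renT ρ t)
  | .bvar n => by
      simp only [subT, renT]
      split
      · rfl
      · split <;> simp only [renT]
  | .fvar a => by simp only [subT, renT]
  | .func f ts => by simp only [subT, renT, renTs_subTs k u ts]
  | .eps A => by simp only [subT, renT, renF_subF (k + 1) _ A, renT_liftT]
theorem renTs_subTs (k : ℕ) (u : Tm) :
    ∀ ts, renTs ρ (subTs k u ts) = subTs k (renT ρ u) (renTs ρ ts)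
  | .nil => by simp only [subTs, renTs]
  | .cons t ts => by simp only [subTs, renTs, renT_subT k u t, renTs_subTs k u ts]
theorem renF_subF (k : ℕ) (u : Tm) : ∀ A, renF ρ (subF k u A) = subF k (renT ρ u) (renF ρ A)
  | .atom p ts => by simp only [subF, renF, renTs_subTs k u ts]
  | .and A B | .or A B | .imp A B => by simp only [subF, renF, renF_subF k u A, renF_subF k u B]
  | .not A => by simp only [subF, renF, renF_subF k u A]
  | .all A | .ex A => by simp only [subF, renF, renF_subF (k + 1) _ A, renT_liftT]
end

theorem renF_inst0 (A : Fm) (t : Tm) : renF ρ (inst0 A t) = inst0 (renF ρ A) (renT ρ t) :=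
  renF_subF ρ 0 t A

variable {ρ σ}

mutual
theorem renT_congr : ∀ t, (∀ a ∈ fvT t, ρ a = σ a) → renT ρ t = renT σ t
  | .bvar n, _ => by simp only [renT]
  | .fvar a, h => by simp only [renT, h a (by simp only [fvT, List.mem_singleton])]
  | .func f ts, h => by simp only [renT, renTs_congr ts h]
  | .eps A, h => by simp only [renT, renF_congr A h]
theorem renTs_congr : ∀ ts, (∀ a ∈ fvTs ts, ρ a = σ a) → renTs ρ ts = renTs σ ts
  | .nil, _ => by simp only [renTs]
  | .cons t ts, h => by
      simp only [fvTs, List.forall_mem_append] at h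
      simp only [renTs, renT_congr t h.1, renTs_congr ts h.2]
theorem renF_congr : ∀ A, (∀ a ∈ fvF A, ρ a = σ a) → renF ρ A = renF σ A
  | .atom p ts, h => by simp only [renF, renTs_congr ts h]
  | .and A B, h | .or A B, h | .imp A B, h => by
      simp only [fvF, List.forall_mem_append] at h
      simp only [renF, renF_congr A h.1, renF_congr B h.2]
  | .not A, h | .all A, h | .ex A, h => by simp only [renF, renF_congr A h]
end

mutual
theorem renT_id : ∀ t, renT id t = t
  | .bvar n => by simp only [renT]
  | .fvar a => by simp only [renT, id]
  | .func f ts => by simp only [renT, renTs_id ts]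
  | .eps A => by simp only [renT, renF_id A]
theorem renTs_id : ∀ ts, renTs id ts = ts
  | .nil => by simp only [renTs]
  | .cons t ts => by simp only [renTs, renT_id t, renTs_id ts]
theorem renF_id : ∀ A, renF id A = A
  | .atom p ts => by simp only [renF, renTs_id ts]
  | .and A B | .or A B | .imp A B => by simp only [renF, renF_id A, renF_id B]
  | .not A | .all A | .ex A => by simp only [renF, renF_id A]
end

theorem renF_update_of_notMem {a b : ℕ} {A : Fm} (ha : a ∉ fvF A) :
    renF (Function.update ρ a b) A = renF ρ A :=
  renF_congr A fun _ hc => Function.update_of_ne (ne_of_mem_of_not_mem hc ha) _ _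

theorem renF_update_inst0_fvar {a b : ℕ} {A : Fm} (ha : a ∉ fvF A) :
    renF (Function.update ρ a b) (inst0 A (.fvar a)) = inst0 (renF ρ A) (.fvar b) := by
  rw [renF_inst0, renF_update_of_notMem ha, renT, Function.update_self]

end Renaming

theorem notMem_fvSeq {a : ℕ} {Γ Δ : List Fm} :
    a ∉ fvSeq Γ Δ ↔ (∀ A ∈ Γ, a ∉ fvF A) ∧ ∀ A ∈ Δ, a ∉ fvF A := by
  rw [← List.forall_mem_append, fvSeq]
  induction Γ ++ Δ with
  | nil => simp only [List.foldr_nil, List.not_mem_nil, not_false_eq_true, false_imp_iff,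
      implies_true]
  | cons A Θ ih => rw [List.foldr_cons, List.mem_append, not_or, ih, List.forall_mem_cons]

/-! ### Bounded cut-free provability -/

/-- The sequent `Γ ⊢ Δ` has a cut-free LK-proof of size at most `s`. -/
def CutFree (Γ Δ : List Fm) (s : ℕ) : Prop :=
  ∃ d : Deriv Γ Δ, d.Std ∧ d.cutFms = [] ∧ d.size ≤ s

namespace CutFree

variable {Γ Γ' Δ Δ' : List Fm} {A : Fm} {s t : ℕ}

theorem mono (h : CutFree Γ Δ s) (hst : s ≤ t) : CutFree Γ Δ t :=
  let ⟨d, hd, hc, hs⟩ := h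
  ⟨d, hd, hc, hs.trans hst⟩

theorem perm_left (h : CutFree Γ Δ s) (p : Γ.Perm Γ') : CutFree Γ' Δ (s + 1) :=
  let ⟨d, hd, hc, hs⟩ := h
  ⟨.permL _ _ _ p d, hd, hc, Nat.succ_le_succ hs⟩

theorem perm_right (h : CutFree Γ Δ s) (p : Δ.Perm Δ') : CutFree Γ Δ' (s + 1) :=
  let ⟨d, hd, hc, hs⟩ := h
  ⟨.permR _ _ _ p d, hd, hc, Nat.succ_le_succ hs⟩

theorem weaken_left (h : CutFree Γ Δ s) : ∀ Γ', CutFree (Γ' ++ Γ) Δ (s + Γ'.length)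
  | [] => h
  | A :: Γ' =>
    let ⟨d, hd, hc, hs⟩ := h.weaken_left Γ'
    ⟨.wL A _ _ d, hd, hc, Nat.succ_le_succ hs⟩

theorem weaken_right (h : CutFree Γ Δ s) : ∀ Δ', CutFree Γ (Δ' ++ Δ) (s + Δ'.length)
  | [] => h
  | A :: Δ' =>
    let ⟨d, hd, hc, hs⟩ := h.weaken_right Δ'
    ⟨.wR A _ _ d, hd, hc, Nat.succ_le_succ hs⟩

theorem absorb_left (hA : A ∈ Γ) (h : CutFree (A :: Γ) Δ s) : CutFree Γ Δ (s + 3) := by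
  obtain ⟨Θ, p⟩ : ∃ Θ, Γ.Perm (A :: Θ) :=
    let ⟨Γ₁, Γ₂, e⟩ := List.append_of_mem hA
    ⟨Γ₁ ++ Γ₂, e ▸ List.perm_middle⟩
  obtain ⟨d, hd, hc, hs⟩ := h.perm_left (p.cons A)
  exact perm_left (s := s + 2) ⟨.cL A _ _ d, hd, hc, Nat.succ_le_succ hs⟩ p.symm

theorem absorb_right (hA : A ∈ Δ) (h : CutFree Γ (A :: Δ) s) : CutFree Γ Δ (s + 3) := by
  obtain ⟨Θ, p⟩ : ∃ Θ, Δ.Perm (A :: Θ) :=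
    let ⟨Δ₁, Δ₂, e⟩ := List.append_of_mem hA
    ⟨Δ₁ ++ Δ₂, e ▸ List.perm_middle⟩
  obtain ⟨d, hd, hc, hs⟩ := h.perm_right (p.cons A)
  exact perm_right (s := s + 2) ⟨.cR A _ _ d, hd, hc, Nat.succ_le_succ hs⟩ p.symm

theorem absorb_append_left :
    ∀ Γ' {s}, Γ' ⊆ Γ → CutFree (Γ' ++ Γ) Δ s → CutFree Γ Δ (s + 3 * Γ'.length)
  | [], _, _, h => h
  | A :: Γ', _, hΓ, h =>
    (absorb_append_left Γ' (List.subset_of_cons_subset hΓ)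
      (h.absorb_left (List.mem_append_right Γ' (hΓ List.mem_cons_self)))).mono
      (by rw [List.length_cons]; omega)

theorem absorb_append_right :
    ∀ Δ' {s}, Δ' ⊆ Δ → CutFree Γ (Δ' ++ Δ) s → CutFree Γ Δ (s + 3 * Δ'.length)
  | [], _, _, h => h
  | A :: Δ', _, hΔ, h =>
    (absorb_append_right Δ' (List.subset_of_cons_subset hΔ)
      (h.absorb_right (List.mem_append_right Δ' (hΔ List.mem_cons_self)))).mono
      (by rw [List.length_cons]; omega)

theorem absorb_self (h : CutFree (Γ ++ Γ) (Δ ++ Δ) s) :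
    CutFree Γ Δ (s + 3 * (Γ.length + Δ.length)) :=
  ((h.absorb_append_left Γ (List.Subset.refl Γ)).absorb_append_right Δ
    (List.Subset.refl Δ)).mono (by omega)

theorem of_mem (hΓ : A ∈ Γ) (hΔ : A ∈ Δ) : CutFree Γ Δ (Γ.length + Δ.length + 9) := by
  have weakened : CutFree (Γ ++ [A]) (Δ ++ [A]) (1 + Γ.length + Δ.length) :=
    (weaken_left ⟨.ax A, trivial, rfl, le_rfl⟩ Γ).weaken_right Δ
  exact (((weakened.perm_left List.perm_append_comm).perm_right
    List.perm_append_comm).absorb_left hΓ |>.absorb_right hΔ).mono (by omega)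

end CutFree

/-! ### Signed formulas and tableaux -/

/-- A signed formula: `(true, A)` stands for `A` in the antecedent, `(false, A)` for `A` in the
succedent. -/
abbrev SignedFm := Bool × Fm

/-- The formulas of sign `b` in `S`, so that `S` is the sequent `side true S ⊢ side false S`. -/
def side (b : Bool) (S : List SignedFm) : List Fm :=
  S.filterMap fun X => if X.1 = b then some X.2 else none

theorem mem_side {b : Bool} {A : Fm} {S : List SignedFm} : A ∈ side b S ↔ (b, A) ∈ S := by
  simp [side]

theorem length_side_add_length_side (S : List SignedFm) :
    (side true S).length + (side false S).length = S.length := by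
  induction S with
  | nil => rfl
  | cons X S ih =>
    rcases X with ⟨_ | _, A⟩
    · exact congrArg Nat.succ ih
    · exact (Nat.succ_add _ _).trans (congrArg Nat.succ ih)

/-- Smullyan's conjunctive signed formulas `X` with their components; a signed negation has its
only component twice. -/
inductive Alpha : SignedFm → SignedFm → SignedFm → Prop
  | andL (A B : Fm) : Alpha (true, .and A B) (true, A) (true, B)
  | orR (A B : Fm) : Alpha (false, .or A B) (false, A) (false, B)
  | impR (A B : Fm) : Alpha (false, .imp A B) (true, A) (false, B)
  | notL (A : Fm) : Alpha (true, .not A) (false, A) (false, A)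
  | notR (A : Fm) : Alpha (false, .not A) (true, A) (true, A)

/-- Smullyan's disjunctive signed formulas with their components. -/
inductive Beta : SignedFm → SignedFm → SignedFm → Prop
  | andR (A B : Fm) : Beta (false, .and A B) (false, A) (false, B)
  | orL (A B : Fm) : Beta (true, .or A B) (true, A) (true, B)
  | impL (A B : Fm) : Beta (true, .imp A B) (false, A) (true, B)

/-- The quantifier that is weak for the sign `b`. -/
def weakQ : Bool → Fm → Fm
  | true => .all
  | false => .ex

/-- The quantifier that is strong for the sign `b`. -/
def strongQ : Bool → Fm → Fm
  | true => .ex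
  | false => .all

/-- `Tableau S k`: the branch `S` can be extended to a closed tableau whose leaves and non-branching
inferences together number at most `k`. With branching inferences not counted, `k` is additive
at them. -/
inductive Tableau : List SignedFm → ℕ → Prop
  | close {S : List SignedFm} (A : Fm) : (true, A) ∈ S → (false, A) ∈ S → Tableau S 1
  | alpha {S : List SignedFm} {X Y Z : SignedFm} {k : ℕ} :
      Alpha X Y Z → X ∈ S → Tableau (Y :: Z :: S) k → Tableau S (k + 1)
  | beta {S : List SignedFm} {X Y Z : SignedFm} {k l : ℕ} :
      Beta X Y Z → X ∈ S → Tableau (Y :: S) k → Tableau (Z :: S) l → Tableau S (k + l)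
  | gamma {S : List SignedFm} {b : Bool} {A : Fm} {k : ℕ} (u : Tm) :
      (b, weakQ b A) ∈ S → Tableau ((b, inst0 A u) :: S) k → Tableau S (k + 1)
  | delta {S : List SignedFm} {b : Bool} {A : Fm} {k : ℕ} (a : ℕ) :
      (b, strongQ b A) ∈ S → (∀ X ∈ S, a ∉ fvF X.2) →
      Tableau ((b, inst0 A (.fvar a)) :: S) k → Tableau S (k + 1)
  | mono {S : List SignedFm} {k l : ℕ} : k ≤ l → Tableau S k → Tableau S l

theorem Tableau.pos {S : List SignedFm} {k : ℕ} (t : Tableau S k) : 0 < k := by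
  induction t <;> omega

section TableauToLK

variable {S : List SignedFm} {X Y Z : SignedFm} {A : Fm} {b : Bool} {a s s' : ℕ}

theorem CutFree.alpha (hα : Alpha X Y Z) (hX : X ∈ S)
    (h : CutFree (side true (Y :: Z :: S)) (side false (Y :: Z :: S)) s) :
    CutFree (side true S) (side false S) (s + 5) := by
  obtain ⟨d, hd, hc, hs⟩ := h
  have size_le : d.size + 1 ≤ s + 2 := by omega
  refine mono (s := s + 2 + 3) ?_ le_rfl
  cases hα with
  | andL A B =>
    exact absorb_left (mem_side.2 hX) ⟨.andL A B _ _ d, hd, hc, size_le⟩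
  | orR A B =>
    exact absorb_right (mem_side.2 hX) ⟨.orR A B _ _ d, hd, hc, size_le⟩
  | impR A B =>
    exact absorb_right (mem_side.2 hX) ⟨.impR A B _ _ d, hd, hc, size_le⟩
  | notL A =>
    exact absorb_left (mem_side.2 hX)
      ⟨.notL A _ _ (.cR A _ _ d), hd, hc, Nat.add_le_add_right hs 2⟩
  | notR A =>
    exact absorb_right (mem_side.2 hX)
      ⟨.notR A _ _ (.cL A _ _ d), hd, hc, Nat.add_le_add_right hs 2⟩

theorem CutFree.beta (hβ : Beta X Y Z) (hX : X ∈ S)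
    (h : CutFree (side true (Y :: S)) (side false (Y :: S)) s)
    (h' : CutFree (side true (Z :: S)) (side false (Z :: S)) s') :
    CutFree (side true S) (side false S) (s + s' + 4 + 3 * S.length) := by
  obtain ⟨d, hd, hc, hs⟩ := h
  obtain ⟨e, he, hc', hs'⟩ := h'
  have cuts : d.cutFms ++ e.cutFms = [] := List.append_eq_nil_iff.2 ⟨hc, hc'⟩
  have size_le : d.size + e.size + 1 ≤ s + s' + 1 := by omega
  rw [← length_side_add_length_side]
  refine absorb_self ?_
  have mem : X.2 ∈ side X.1 S := mem_side.2 hX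
  cases hβ with
  | andR A B =>
    exact absorb_right (List.mem_append_left _ mem)
      ⟨.andR A B _ _ _ _ d e, ⟨hd, he⟩, cuts, size_le⟩
  | orL A B =>
    exact absorb_left (List.mem_append_left _ mem)
      ⟨.orL A B _ _ _ _ d e, ⟨hd, he⟩, cuts, size_le⟩
  | impL A B =>
    exact absorb_left (List.mem_append_left _ mem)
      ⟨.impL A B _ _ _ _ d e, ⟨hd, he⟩, cuts, size_le⟩

theorem CutFree.gamma (u : Tm) (hX : (b, weakQ b A) ∈ S)
    (h : CutFree (side true ((b, inst0 A u) :: S)) (side false ((b, inst0 A u) :: S)) s) :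
    CutFree (side true S) (side false S) (s + 4) := by
  obtain ⟨d, hd, hc, hs⟩ := h
  cases b with
  | true => exact absorb_left (mem_side.2 hX) ⟨.allL u A _ _ d, hd, hc, Nat.succ_le_succ hs⟩
  | false => exact absorb_right (mem_side.2 hX) ⟨.exR u A _ _ d, hd, hc, Nat.succ_le_succ hs⟩

theorem CutFree.delta (hX : (b, strongQ b A) ∈ S) (ha : ∀ X ∈ S, a ∉ fvF X.2)
    (h : CutFree (side true ((b, inst0 A (.fvar a)) :: S))
      (side false ((b, inst0 A (.fvar a)) :: S)) s) :
    CutFree (side true S) (side false S) (s + 4) := by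
  obtain ⟨d, hd, hc, hs⟩ := h
  have fresh (c : Bool) : ∀ B ∈ side c S, a ∉ fvF B := fun B hB => ha _ (mem_side.1 hB)
  cases b with
  | true =>
    have eigen : a ∉ fvSeq (.ex A :: side true S) (side false S) :=
      notMem_fvSeq.2 ⟨List.forall_mem_cons.2 ⟨ha _ hX, fresh true⟩, fresh false⟩
    exact absorb_left (mem_side.2 hX) ⟨.exL a A _ _ d, ⟨eigen, hd⟩, hc, Nat.succ_le_succ hs⟩
  | false =>
    have eigen : a ∉ fvSeq (side true S) (.all A :: side false S) :=
      notMem_fvSeq.2 ⟨fresh true, List.forall_mem_cons.2 ⟨ha _ hX, fresh false⟩⟩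
    exact absorb_right (mem_side.2 hX) ⟨.allR a A _ _ d, ⟨eigen, hd⟩, hc, Nat.succ_le_succ hs⟩

/-- The tableau has fewer than `2 * k` inferences, all of whose sequents have length at most
`S.length + 2 * k`, and each is simulated in LK at a cost of at most `M`. -/
theorem Tableau.exists_cutFree {k : ℕ} (t : Tableau S k) {M : ℕ}
    (hM : 5 * (S.length + 2 * k) ≤ M) :
    ∃ s, CutFree (side true S) (side false S) s ∧ s + M ≤ 2 * k * M := by
  induction t with
  | @close S A hL hR =>
    refine ⟨_, .of_mem (mem_side.2 hL) (mem_side.2 hR), ?_⟩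
    have := List.length_pos_of_mem hL
    rw [length_side_add_length_side]
    omega
  | alpha hα hX _ ih =>
    obtain ⟨s, h, hs⟩ := ih (by simp only [List.length_cons]; omega)
    exact ⟨_, h.alpha hα hX, by linarith⟩
  | beta hβ hX t t' ih ih' =>
    have := t.pos
    have := t'.pos
    obtain ⟨s, h, hs⟩ := ih (by simp only [List.length_cons]; omega)
    obtain ⟨s', h', hs'⟩ := ih' (by simp only [List.length_cons]; omega)
    exact ⟨_, h.beta hβ hX h', by linarith⟩
  | gamma u hX _ ih =>
    obtain ⟨s, h, hs⟩ := ih (by simp only [List.length_cons]; omega)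
    exact ⟨_, h.gamma u hX, by linarith⟩
  | delta a hX ha _ ih =>
    obtain ⟨s, h, hs⟩ := ih (by simp only [List.length_cons]; omega)
    exact ⟨_, h.delta hX ha, by linarith⟩
  | mono hkl _ ih =>
    obtain ⟨s, h, hs⟩ := ih (by omega)
    exact ⟨s, h, hs.trans (by gcongr)⟩

end TableauToLK


/-! ### Valuations -/

/-- The valuation `v` of formulas obeys the truth table of the outermost connective of the given
formula. Components are evaluated by `v` rather than recursively: what is known about `v` is only
its behaviour at finitely many formulas. -/
def Respects (v : Fm → Prop) : Fm → Prop
  | .and A B => v (.and A B) ↔ v A ∧ v B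
  | .or A B => v (.or A B) ↔ v A ∨ v B
  | .imp A B => v (.imp A B) ↔ (v A → v B)
  | .not A => v (.not A) ↔ ¬ v A
  | .atom _ _ | .all _ | .ex _ => True

/-- The signed formula `X` is true under `v`. -/
def Holds (v : Fm → Prop) (X : SignedFm) : Prop :=
  v X.2 ↔ X.1 = true

section Valuations

variable {v : Fm → Prop} {X Y Z : SignedFm} {F G : Fm}

theorem Alpha.respects_iff (hα : Alpha X Y Z) :
    Respects v X.2 ↔ (Holds v X ↔ Holds v Y ∧ Holds v Z) := by
  cases hα <;> simp only [Respects, Holds, Bool.false_eq_true, iff_true, iff_false] <;> tauto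

theorem Beta.respects_iff (hβ : Beta X Y Z) :
    Respects v X.2 ↔ (Holds v X ↔ Holds v Y ∨ Holds v Z) := by
  cases hβ <;> simp only [Respects, Holds, Bool.false_eq_true, iff_true, iff_false] <;> tauto

theorem alpha_or_beta_or_forall_respects (X : SignedFm) :
    (∃ Y Z, Alpha X Y Z) ∨ (∃ Y Z, Beta X Y Z) ∨ ∀ v, Respects v X.2 :=
  match X with
  | (true, .and A B) => .inl ⟨_, _, .andL A B⟩
  | (false, .and A B) => .inr (.inl ⟨_, _, .andR A B⟩)
  | (true, .or A B) => .inr (.inl ⟨_, _, .orL A B⟩)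
  | (false, .or A B) => .inl ⟨_, _, .orR A B⟩
  | (true, .imp A B) => .inr (.inl ⟨_, _, .impL A B⟩)
  | (false, .imp A B) => .inl ⟨_, _, .impR A B⟩
  | (true, .not A) => .inl ⟨_, _, .notL A⟩
  | (false, .not A) => .inl ⟨_, _, .notR A⟩
  | (_, .atom _ _) | (_, .all _) | (_, .ex _) => .inr (.inr fun _ => trivial)

theorem ne_of_szF_lt (h : szF G < szF F) : G ≠ F :=
  fun e => h.ne (congrArg szF e)

noncomputable instance : DecidableEq Fm := Classical.decEq Fm

theorem respects_update_iff {p : Prop} (hne : G ≠ F) (hsz : szF G ≤ szF F) :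
    Respects (Function.update v F p) G ↔ Respects v G := by
  have component {A : Fm} (hA : szF A < szF G) : Function.update v F p A = v A :=
    Function.update_of_ne (ne_of_szF_lt (hA.trans_le hsz)) _ _
  cases G with
  | and A B | or A B | imp A B =>
    have hA := component (A := A) (by simp only [szF]; omega)
    have hB := component (A := B) (by simp only [szF]; omega)
    simp only [Respects, Function.update_of_ne hne, hA, hB]
  | not A =>
    have hA := component (A := A) (by simp only [szF]; omega)
    simp only [Respects, Function.update_of_ne hne, hA]
  | atom | all | ex => rfl

theorem exists_respects_update (v : Fm → Prop) (F : Fm) :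
    ∃ p, Respects (Function.update v F p) F := by
  have component (p : Prop) {A : Fm} (hA : szF A < szF F) : Function.update v F p A = v A :=
    Function.update_of_ne (ne_of_szF_lt hA) _ _
  cases F with
  | and A B | or A B | imp A B =>
    have hA p := component p (A := A) (by simp only [szF]; omega)
    have hB p := component p (A := B) (by simp only [szF]; omega)
    simp only [Respects, Function.update_self, hA, hB]
    exact ⟨_, Iff.rfl⟩
  | not A =>
    have hA p := component p (A := A) (by simp only [szF]; omega)
    simp only [Respects, Function.update_self, hA]
    exact ⟨_, Iff.rfl⟩
  | atom | all | ex => exact ⟨True, trivial⟩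

theorem exists_respects_insert {P : Finset Fm} {S : List SignedFm} (hFP : F ∉ P)
    (hmax : ∀ G ∈ P, szF G ≤ szF F) (hFS : ∀ b, (b, F) ∉ S)
    (hP : ∀ G ∈ P, Respects v G) (hS : ∀ X ∈ S, Holds v X) :
    ∃ w, (∀ G ∈ insert F P, Respects w G) ∧ ∀ X ∈ S, Holds w X := by
  obtain ⟨p, hp⟩ := exists_respects_update v F
  refine ⟨Function.update v F p, Finset.forall_mem_insert _ _ _ |>.2 ⟨hp, fun G hG => ?_⟩,
    fun X hX => ?_⟩
  · exact (respects_update_iff (ne_of_mem_of_not_mem hG hFP) (hmax G hG)).2 (hP G hG)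
  · have hne : X.2 ≠ F := fun e => hFS X.1 (e ▸ hX)
    rw [Holds, Function.update_of_ne hne]
    exact hS X hX

theorem Tableau.of_forall_not_holds {S : List SignedFm}
    (h : ∀ v, ¬ ∀ X ∈ S, Holds v X) : Tableau S 1 := by
  have hS := h fun A => (true, A) ∈ S
  push Not at hS
  obtain ⟨⟨_ | _, A⟩, hX, hfalse⟩ := hS
  · simp only [Holds, Bool.false_eq_true, iff_false, not_not] at hfalse
    exact .close A hfalse hX
  · exact absurd (iff_of_true hX rfl) hfalse

/-- Decompose the formulas of `P` in the order of decreasing size: a formula of maximal size which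
does not occur in `S` may be given any truth value, and can be dropped. -/
theorem Tableau.of_forall_respects_not_holds (P : Finset Fm) (S : List SignedFm)
    (h : ∀ v, (∀ F ∈ P, Respects v F) → ¬ ∀ X ∈ S, Holds v X) : Tableau S (2 ^ P.card) := by
  induction P using Finset.induction_on_max_value szF generalizing S with
  | empty => exact of_forall_not_holds fun v => h v (by simp only [Finset.notMem_empty,
      false_imp_iff, implies_true])
  | insert F P hFP hmax ih =>
    simp only [Finset.forall_mem_insert] at h
    rw [Finset.card_insert_of_notMem hFP, pow_succ, mul_two]
    have one_le : 1 ≤ 2 ^ P.card := Nat.one_le_two_pow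
    by_cases hFS : ∃ b, (b, F) ∈ S
    · obtain ⟨b, hX⟩ := hFS
      obtain ⟨Y, Z, hα⟩ | ⟨Y, Z, hβ⟩ | trivially := alpha_or_beta_or_forall_respects (b, F)
      · refine mono (Nat.add_le_add_left one_le _) (alpha hα hX (ih _ fun v hP hS => ?_))
        obtain ⟨hY, hZ, hS⟩ := by simpa only [List.forall_mem_cons] using hS
        exact h v ⟨hα.respects_iff.2 (iff_of_true (hS _ hX) ⟨hY, hZ⟩), hP⟩ hS
      · refine beta hβ hX (ih _ fun v hP hS => ?_) (ih _ fun v hP hS => ?_) <;>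
          obtain ⟨hYZ, hS⟩ := List.forall_mem_cons.1 hS
        · exact h v ⟨hβ.respects_iff.2 (iff_of_true (hS _ hX) (.inl hYZ)), hP⟩ hS
        · exact h v ⟨hβ.respects_iff.2 (iff_of_true (hS _ hX) (.inr hYZ)), hP⟩ hS
      · exact mono (Nat.le_add_right _ _) (ih S fun v hP => h v ⟨trivially v, hP⟩)
    · refine mono (Nat.le_add_right _ _) (ih S fun v hP hS => ?_)
      obtain ⟨w, hw, hwS⟩ := exists_respects_insert hFP hmax (not_exists.1 hFS) hP hS
      exact h w (Finset.forall_mem_insert _ _ _ |>.1 hw) hwS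

end Valuations

/-! ### Running a derivation -/

/-- The state of a run: the current tableau branch, and the quantifier-free formulas that have been
principal so far but are not decomposed yet. -/
structure State where
  recorded : Finset Fm
  branch : List SignedFm

namespace State

/-- `v` satisfies the branch and respects the connectives of the recorded formulas. -/
def Admits (σ : State) (v : Fm → Prop) : Prop :=
  (∀ F ∈ σ.recorded, Respects v F) ∧ ∀ X ∈ σ.branch, Holds v X

/-- No valuation admitted by `σ` satisfies `T`. -/
def Refutes (σ : State) (T : List SignedFm) : Prop :=
  ∀ v, σ.Admits v → ¬ ∀ X ∈ T, Holds v X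

/-- All quantified formulas of `T` are on the branch. -/
def Covers (σ : State) (T : List SignedFm) : Prop :=
  ∀ X ∈ T, qfree X.2 = true ∨ X ∈ σ.branch

/-- `τ` is reached from `σ` by prolonging the branch and recording at most `n` formulas. -/
structure Extends (n : ℕ) (σ τ : State) : Prop where
  recorded_subset : σ.recorded ⊆ τ.recorded
  branch_subset : σ.branch ⊆ τ.branch
  card_le : τ.recorded.card ≤ σ.recorded.card + n

/-- Every extension of `σ` by at most `n` recorded formulas that refutes `T` has a tableau of
size `k`. -/
def ClosesBy (σ : State) (n : ℕ) (T : List SignedFm) (k : ℕ) : Prop :=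
  ∀ τ, Extends n σ τ → τ.Refutes T → Tableau τ.branch k

/-- Record the formula `F`. -/
noncomputable def record (σ : State) (F : Fm) : State :=
  ⟨insert F σ.recorded, σ.branch⟩

/-- Prolong the branch by `S`. -/
def prolong (σ : State) (S : List SignedFm) : State :=
  ⟨σ.recorded, S ++ σ.branch⟩

variable {σ τ υ : State} {m n : ℕ} {T : List SignedFm} {v : Fm → Prop}

theorem Extends.refl (σ : State) : Extends 0 σ σ :=
  ⟨subset_rfl, List.Subset.refl _, le_rfl⟩

theorem Extends.trans (h : Extends m σ τ) (h' : Extends n τ υ) : Extends (m + n) σ υ :=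
  ⟨h.1.trans h'.1, List.Subset.trans h.2 h'.2, by have := h.3; have := h'.3; omega⟩

theorem Extends.mono (h : Extends m σ τ) (hmn : m ≤ n) : Extends n σ τ :=
  ⟨h.1, h.2, h.3.trans (Nat.add_le_add_left hmn _)⟩

theorem extends_record (σ : State) (F : Fm) : Extends 1 σ (σ.record F) :=
  ⟨Finset.subset_insert _ _, List.Subset.refl _, Finset.card_insert_le _ _⟩

theorem extends_prolong (σ : State) (S : List SignedFm) : Extends 0 σ (σ.prolong S) :=
  ⟨subset_rfl, List.subset_append_right _ _, le_rfl⟩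

theorem Extends.admits (h : Extends n σ τ) (hv : τ.Admits v) : σ.Admits v :=
  ⟨fun F hF => hv.1 F (h.1 hF), fun X hX => hv.2 X (h.2 hX)⟩

theorem Refutes.of_extends (hT : σ.Refutes T) (h : Extends n σ τ) : τ.Refutes T :=
  fun v hv => hT v (h.admits hv)

theorem Covers.of_extends (hT : σ.Covers T) (h : Extends n σ τ) : τ.Covers T :=
  fun X hX => (hT X hX).imp_right fun hX => h.2 hX

theorem Covers.cons {X : SignedFm} (hX : qfree X.2 = true ∨ X ∈ σ.branch) (hT : σ.Covers T) :
    σ.Covers (X :: T) :=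
  List.forall_mem_cons.2 ⟨hX, hT⟩

end State

open State

/-- A search strategy that refutes `T` while recording at most `n` formulas; the tableau of the
state it starts from is at most `2 ^ n` times larger than those of the states it ends in. -/
def Run (n : ℕ) (T : List SignedFm) : Prop :=
  ∀ σ : State, σ.Covers T → ∀ k, σ.ClosesBy n T k → Tableau σ.branch (2 ^ n * k)

theorem Alpha.qfree_components {X Y Z : SignedFm} (hα : Alpha X Y Z) (hX : qfree X.2 = true) :
    qfree Y.2 = true ∧ qfree Z.2 = true := by
  cases hα <;> simpa only [qfree, Bool.and_eq_true, and_self] using hX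

theorem Beta.qfree_components {X Y Z : SignedFm} (hβ : Beta X Y Z) (hX : qfree X.2 = true) :
    qfree Y.2 = true ∧ qfree Z.2 = true := by
  cases hβ <;> simpa only [qfree, Bool.and_eq_true] using hX

theorem two_pow_mul_le_two_pow_mul {m n : ℕ} (h : m ≤ n) (k : ℕ) : 2 ^ m * k ≤ 2 ^ n * k :=
  Nat.mul_le_mul_right k (Nat.pow_le_pow_right Nat.two_pos h)

namespace Run

variable {σ σ' : State} {l m n k : ℕ} {T T' : List SignedFm} {X Y Z : SignedFm} {A : Fm} {b : Bool}

theorem succ (r : Run n T) : Run (n + 1) T := fun σ hT k hk =>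
  .mono (two_pow_mul_le_two_pow_mul n.le_succ k) (r σ hT k fun τ hτ => hk τ (hτ.mono n.le_succ))

theorem close (hL : (true, A) ∈ T) (hR : (false, A) ∈ T) : Run n T := by
  intro σ _ k hk
  have refutes : σ.Refutes T := fun v _ hv => absurd ((hv _ hL).2 rfl) fun hA =>
    Bool.false_ne_true ((hv _ hR).1 hA)
  exact .mono (Nat.le_mul_of_pos_left k (Nat.two_pow_pos n))
    (hk σ ((Extends.refl σ).mono n.zero_le) refutes)

theorem of_extends (r : Run n T') (hσ : Extends m σ σ') (hT' : σ'.Covers T')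
    (hTT' : ∀ v, σ'.Admits v → (∀ X ∈ T, Holds v X) → ∀ X ∈ T', Holds v X)
    (hk : σ.ClosesBy (m + n) T k) : Tableau σ'.branch (2 ^ n * k) :=
  r σ' hT' k fun τ hτ hT => hk τ (hσ.trans hτ) fun v hv hX =>
    hT v hv (hTT' v (hτ.admits hv) hX)

theorem of_prolong (S : List SignedFm) (r : Run n (S ++ T)) (hT : σ.Covers T) (hnm : n ≤ m)
    (hk : σ.ClosesBy m T k) : Tableau (S ++ σ.branch) (2 ^ n * k) := by
  have ext := extends_prolong σ S
  refine r.of_extends (σ' := σ.prolong S) (T := T) ext ?_ ?_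
    fun τ hτ => hk τ (hτ.mono ((Nat.zero_add n).trans_le hnm))
  · exact List.forall_mem_append.2
      ⟨fun X hX => .inr (List.mem_append_left _ hX), hT.of_extends ext⟩
  · exact fun v hv hT => List.forall_mem_append.2
      ⟨fun X hX => hv.2 X (List.mem_append_left _ hX), hT⟩

/-- The second premise is run in every state in which the first one ends. -/
theorem sequential (r : Run n (Y :: T)) (r' : Run m (Z :: T)) (hσ : Extends l σ σ')
    (hT : σ.Covers T) (hY : qfree Y.2 = true) (hZ : qfree Z.2 = true)
    (hYZ : ∀ v, σ'.Admits v → (∀ X ∈ T, Holds v X) → Holds v Y ∨ Holds v Z)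
    (hk : σ.ClosesBy (l + n + m) T k) : Tableau σ'.branch (2 ^ (n + m) * k) := by
  rw [pow_add, mul_assoc]
  refine r σ' (.cons (.inl hY) (hT.of_extends hσ)) _ fun τ hτ hτY => ?_
  refine r' τ (.cons (.inl hZ) (hT.of_extends (hσ.trans hτ))) _ fun υ hυ hυZ => ?_
  refine hk υ ((hσ.trans hτ).trans hυ) fun v hv hvT => ?_
  have hυY : υ.Refutes (Y :: T) := hτY.of_extends hυ
  rcases hYZ v ((hτ.trans hυ).admits hv) hvT with h | h
  · exact hυY v hv (List.forall_mem_cons.2 ⟨h, hvT⟩)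
  · exact hυZ v hv (List.forall_mem_cons.2 ⟨h, hvT⟩)

theorem alpha (hα : Alpha X Y Z) (hX : X ∈ T) (r : Run n (Y :: Z :: T)) : Run (n + 1) T := by
  intro σ hT k hk
  rcases hT X hX with hq | hXσ
  · obtain ⟨hY, hZ⟩ := hα.qfree_components hq
    have ext := extends_record σ X.2
    refine .mono (two_pow_mul_le_two_pow_mul n.le_succ k)
      (r.of_extends (σ' := σ.record X.2) ext (.cons (.inl hY) (.cons (.inl hZ) (hT.of_extends ext)))
        (fun v hv hvT => ?_) (by rwa [Nat.add_comm]))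
    obtain ⟨hvY, hvZ⟩ := (hα.respects_iff.1 (hv.1 _ (Finset.mem_insert_self _ _))).1 (hvT X hX)
    exact List.forall_mem_cons.2 ⟨hvY, List.forall_mem_cons.2 ⟨hvZ, hvT⟩⟩
  · have t : Tableau (Y :: Z :: σ.branch) (2 ^ n * k) :=
      of_prolong [Y, Z] r hT n.le_succ hk
    have := t.pos
    exact .mono (by rw [pow_succ']; linarith) (.alpha hα hXσ t)

theorem beta (hβ : Beta X Y Z) (hX : X ∈ T) (r : Run n (Y :: T)) (r' : Run m (Z :: T)) :
    Run (n + m + 1) T := by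
  intro σ hT k hk
  rcases hT X hX with hq | hXσ
  · obtain ⟨hY, hZ⟩ := hβ.qfree_components hq
    refine .mono (two_pow_mul_le_two_pow_mul (n + m).le_succ k)
      (r.sequential (σ' := σ.record X.2) r' (extends_record σ X.2) hT hY hZ (fun v hv hvT => ?_)
        (by rwa [Nat.add_assoc, Nat.add_comm 1]))
    exact (hβ.respects_iff.1 (hv.1 _ (Finset.mem_insert_self _ _))).1 (hvT X hX)
  · have t := of_prolong [Y] r hT (by omega) hk
    have t' := of_prolong [Z] r' hT (by omega) hk
    refine .mono ?_ (.beta hβ hXσ t t')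
    calc 2 ^ n * k + 2 ^ m * k ≤ 2 ^ (n + m) * k + 2 ^ (n + m) * k :=
          Nat.add_le_add (two_pow_mul_le_two_pow_mul (n.le_add_right m) k)
            (two_pow_mul_le_two_pow_mul (m.le_add_left n) k)
      _ = 2 ^ (n + m + 1) * k := by ring

theorem cut (hA : qfree A = true) (r : Run n ((false, A) :: T)) (r' : Run m ((true, A) :: T)) :
    Run (n + m + 1) T := by
  intro σ hT k hk
  refine .mono (two_pow_mul_le_two_pow_mul (n + m).le_succ k)
    (r.sequential r' (Extends.refl σ) hT hA hA (fun v _ _ => ?_)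
      fun τ hτ => hk τ (hτ.mono (by omega)))
  simp only [Holds, Bool.false_eq_true, iff_false, iff_true]
  exact (em (v A)).symm

theorem gamma (u : Tm) (hX : (b, weakQ b A) ∈ T) (r : Run n ((b, inst0 A u) :: T)) :
    Run (n + 1) T := by
  intro σ hT k hk
  have hXσ : (b, weakQ b A) ∈ σ.branch := (hT _ hX).resolve_left (by cases b <;> exact nofun)
  have t := of_prolong [_] r hT n.le_succ hk
  have := t.pos
  exact .mono (by rw [pow_succ']; linarith) (.gamma u hXσ t)

theorem delta (hX : (b, strongQ b A) ∈ T) (r : ∀ c, Run n ((b, inst0 A (.fvar c)) :: T)) :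
    Run (n + 1) T := by
  intro σ hT k hk
  have hXσ : (b, strongQ b A) ∈ σ.branch := (hT _ hX).resolve_left (by cases b <;> exact nofun)
  obtain ⟨c, hc⟩ := Infinite.exists_notMem_finset (σ.branch.flatMap fun X => fvF X.2).toFinset
  have fresh : ∀ X ∈ σ.branch, c ∉ fvF X.2 := fun X hX hcX =>
    hc (List.mem_toFinset.2 (List.mem_flatMap.2 ⟨X, hX, hcX⟩))
  have t := of_prolong [_] (r c) hT n.le_succ hk
  have := t.pos
  exact .mono (by rw [pow_succ']; linarith) (.delta c hXσ fresh t)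

end Run

theorem qfree_renF (ρ : ℕ → ℕ) : ∀ A, qfree (renF ρ A) = qfree A
  | .and A B | .or A B | .imp A B => by simp only [renF, qfree, qfree_renF ρ A, qfree_renF ρ B]
  | .not A => by simp only [renF, qfree, qfree_renF ρ A]
  | .atom _ _ | .all _ | .ex _ => by simp only [renF, qfree]

/-- After renaming along `ρ`, the formulas of the sequent `Γ ⊢ Δ` occur in `T`. -/
structure Embeds (ρ : ℕ → ℕ) (Γ Δ : List Fm) (T : List SignedFm) : Prop where
  left : ∀ A ∈ Γ, (true, renF ρ A) ∈ T
  right : ∀ A ∈ Δ, (false, renF ρ A) ∈ T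

namespace Embeds

variable {ρ : ℕ → ℕ} {Γ Γ₁ Γ₂ Δ Δ₁ Δ₂ : List Fm} {T : List SignedFm} {A : Fm}

theorem head_left (h : Embeds ρ (A :: Γ) Δ T) : (true, renF ρ A) ∈ T :=
  h.left A List.mem_cons_self

theorem head_right (h : Embeds ρ Γ (A :: Δ) T) : (false, renF ρ A) ∈ T :=
  h.right A List.mem_cons_self

theorem anti (h : Embeds ρ Γ₂ Δ₂ T) (hΓ : Γ₁ ⊆ Γ₂) (hΔ : Δ₁ ⊆ Δ₂) : Embeds ρ Γ₁ Δ₁ T :=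
  ⟨fun A hA => h.left A (hΓ hA), fun A hA => h.right A (hΔ hA)⟩

theorem tail_left (h : Embeds ρ (A :: Γ) Δ T) : Embeds ρ Γ Δ T :=
  h.anti (List.subset_cons_self A Γ) (List.Subset.refl Δ)

theorem tail_right (h : Embeds ρ Γ (A :: Δ) T) : Embeds ρ Γ Δ T :=
  h.anti (List.Subset.refl Γ) (List.subset_cons_self A Δ)

theorem of_append_left (h : Embeds ρ (Γ₁ ++ Γ₂) (Δ₁ ++ Δ₂) T) : Embeds ρ Γ₁ Δ₁ T :=
  h.anti (List.subset_append_left Γ₁ Γ₂) (List.subset_append_left Δ₁ Δ₂)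

theorem of_append_right (h : Embeds ρ (Γ₁ ++ Γ₂) (Δ₁ ++ Δ₂) T) : Embeds ρ Γ₂ Δ₂ T :=
  h.anti (List.subset_append_right Γ₁ Γ₂) (List.subset_append_right Δ₁ Δ₂)

theorem cons (X : SignedFm) (h : Embeds ρ Γ Δ T) : Embeds ρ Γ Δ (X :: T) :=
  ⟨fun A hA => List.mem_cons_of_mem X (h.left A hA),
    fun A hA => List.mem_cons_of_mem X (h.right A hA)⟩

theorem cons_left (h : Embeds ρ Γ Δ T) : Embeds ρ (A :: Γ) Δ ((true, renF ρ A) :: T) :=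
  ⟨List.forall_mem_cons.2 ⟨List.mem_cons_self, (h.cons _).left⟩, (h.cons _).right⟩

theorem cons_right (h : Embeds ρ Γ Δ T) : Embeds ρ Γ (A :: Δ) ((false, renF ρ A) :: T) :=
  ⟨(h.cons _).left, List.forall_mem_cons.2 ⟨List.mem_cons_self, (h.cons _).right⟩⟩

theorem update {a : ℕ} (c : ℕ) (h : Embeds ρ Γ Δ T) (ha : a ∉ fvSeq Γ Δ) :
    Embeds (Function.update ρ a c) Γ Δ T := by
  obtain ⟨haΓ, haΔ⟩ := notMem_fvSeq.1 ha
  constructor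
  · exact fun A hA => (renF_update_of_notMem (haΓ A hA)).symm ▸ h.left A hA
  · exact fun A hA => (renF_update_of_notMem (haΔ A hA)).symm ▸ h.right A hA

theorem eigen_left {a : ℕ} (h : Embeds ρ (.ex A :: Γ) Δ T) (ha : a ∉ fvSeq (.ex A :: Γ) Δ)
    (c : ℕ) :
    Embeds (Function.update ρ a c) (inst0 A (.fvar a) :: Γ) Δ
      ((true, inst0 (renF ρ A) (.fvar c)) :: T) := by
  have haA : a ∉ fvF A := (notMem_fvSeq.1 ha).1 (.ex A) List.mem_cons_self
  rw [← renF_update_inst0_fvar haA]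
  exact (h.update c ha).tail_left.cons_left

theorem eigen_right {a : ℕ} (h : Embeds ρ Γ (.all A :: Δ) T)
    (ha : a ∉ fvSeq Γ (.all A :: Δ)) (c : ℕ) :
    Embeds (Function.update ρ a c) Γ (inst0 A (.fvar a) :: Δ)
      ((false, inst0 (renF ρ A) (.fvar c)) :: T) := by
  have haA : a ∉ fvF A := (notMem_fvSeq.1 ha).2 (.all A) List.mem_cons_self
  rw [← renF_update_inst0_fvar haA]
  exact (h.update c ha).tail_right.cons_right

end Embeds

theorem Deriv.run {Γ Δ : List Fm} (d : Deriv Γ Δ) (hd : d.Std)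
    (hc : ∀ A ∈ d.cutFms, qfree A = true) {ρ : ℕ → ℕ} {T : List SignedFm}
    (h : Embeds ρ Γ Δ T) : Run d.size T := by
  induction d generalizing ρ T with
  | ax A => exact .close h.head_left h.head_right
  | andL A B Γ Δ d ih =>
    exact .alpha (.andL _ _) h.head_left (ih hd hc h.tail_left.cons_left.cons_left)
  | orR A B Γ Δ d ih =>
    exact .alpha (.orR _ _) h.head_right (ih hd hc h.tail_right.cons_right.cons_right)
  | impR A B Γ Δ d ih =>
    exact .alpha (.impR _ _) h.head_right (ih hd hc h.tail_right.cons_right.cons_left)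
  | notL A Γ Δ d ih =>
    exact .alpha (.notL _) h.head_left (ih hd hc (h.tail_left.cons_right.cons _))
  | notR A Γ Δ d ih =>
    exact .alpha (.notR _) h.head_right (ih hd hc (h.tail_right.cons_left.cons _))
  | andR A B Γ₁ Δ₁ Γ₂ Δ₂ d e ihd ihe =>
    have ⟨hcd, hce⟩ := List.forall_mem_append.1 hc
    exact .beta (.andR _ _) h.head_right (ihd hd.1 hcd h.tail_right.of_append_left.cons_right)
      (ihe hd.2 hce h.tail_right.of_append_right.cons_right)
  | orL A B Γ₁ Δ₁ Γ₂ Δ₂ d e ihd ihe =>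
    have ⟨hcd, hce⟩ := List.forall_mem_append.1 hc
    exact .beta (.orL _ _) h.head_left (ihd hd.1 hcd h.tail_left.of_append_left.cons_left)
      (ihe hd.2 hce h.tail_left.of_append_right.cons_left)
  | impL A B Γ₁ Δ₁ Γ₂ Δ₂ d e ihd ihe =>
    have ⟨hcd, hce⟩ := List.forall_mem_append.1 hc
    exact .beta (.impL _ _) h.head_left (ihd hd.1 hcd h.tail_left.of_append_left.cons_right)
      (ihe hd.2 hce h.tail_left.of_append_right.cons_left)
  | cut A Γ₁ Δ₁ Γ₂ Δ₂ d e ihd ihe =>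
    have ⟨hA, hcde⟩ := List.forall_mem_cons.1 hc
    have ⟨hcd, hce⟩ := List.forall_mem_append.1 hcde
    exact .cut ((qfree_renF ρ A).trans hA) (ihd hd.1 hcd h.of_append_left.cons_right)
      (ihe hd.2 hce h.of_append_right.cons_left)
  | allL t A Γ Δ d ih =>
    exact .gamma (b := true) (renT ρ t) h.head_left
      (ih hd hc (renF_inst0 ρ A t ▸ h.tail_left.cons_left))
  | exR t A Γ Δ d ih =>
    exact .gamma (b := false) (renT ρ t) h.head_right
      (ih hd hc (renF_inst0 ρ A t ▸ h.tail_right.cons_right))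
  | allR a A Γ Δ d ih =>
    exact .delta (b := false) h.head_right fun c => ih hd.2 hc (h.eigen_right hd.1 c)
  | exL a A Γ Δ d ih =>
    exact .delta (b := true) h.head_left fun c => ih hd.2 hc (h.eigen_left hd.1 c)
  | wL A Γ Δ d ih => exact (ih hd hc h.tail_left).succ
  | wR A Γ Δ d ih => exact (ih hd hc h.tail_right).succ
  | cL A Γ Δ d ih => exact (ih hd hc ⟨List.forall_mem_cons.2 ⟨h.head_left, h.left⟩, h.right⟩).succ
  | cR A Γ Δ d ih => exact (ih hd hc ⟨h.left, List.forall_mem_cons.2 ⟨h.head_right, h.right⟩⟩).succ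
  | permL Γ Γ' Δ p d ih => exact (ih hd hc (h.anti p.subset (List.Subset.refl Δ))).succ
  | permR Γ Δ Δ' p d ih => exact (ih hd hc (h.anti (List.Subset.refl Γ) p.subset)).succ

theorem Deriv.length_le {Γ Δ : List Fm} (d : Deriv Γ Δ) :
    Γ.length + Δ.length ≤ 2 * d.size := by
  induction d with
  | permL _ _ _ p _ _ | permR _ _ _ p _ _ =>
    have := p.length_eq
    simp only [Deriv.size]
    omega
  | _ => simp only [Deriv.size, List.length_cons, List.length_append, List.length_nil] at *; omega

theorem Deriv.tableau {Γ Δ : List Fm} (d : Deriv Γ Δ) (hd : d.Std)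
    (hc : ∀ A ∈ d.cutFms, qfree A = true) :
    Tableau (Γ.map (Prod.mk true) ++ Δ.map (Prod.mk false)) (4 ^ d.size) := by
  set T : List SignedFm := Γ.map (Prod.mk true) ++ Δ.map (Prod.mk false) with hT
  have embeds : Embeds id Γ Δ T := by
    constructor <;> intro A hA <;> simp [hT, renF_id, hA]
  have four_pow : 4 ^ d.size = 2 ^ d.size * 2 ^ d.size := mul_pow 2 2 d.size
  rw [four_pow]
  refine d.run hd hc embeds ⟨∅, T⟩ (fun X hX => .inr hX) _ fun τ hτ refuted => ?_
  have card_le : τ.recorded.card ≤ d.size := by simpa using hτ.card_le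
  refine .mono (Nat.pow_le_pow_right Nat.two_pos card_le)
    (.of_forall_respects_not_holds τ.recorded τ.branch fun v hv hbranch => ?_)
  exact refuted v ⟨hv, hbranch⟩ fun X hX => hbranch X (hτ.branch_subset hX)

theorem side_map_append_map (Γ Δ : List Fm) :
    side true (Γ.map (Prod.mk true) ++ Δ.map (Prod.mk false)) = Γ ∧
      side false (Γ.map (Prod.mk true) ++ Δ.map (Prod.mk false)) = Δ := by
  simp [side]

theorem propositional_cut_elimination_general {Γ Δ : List Fm} (d : Deriv Γ Δ) (hd : d.Std)
    (hc : ∀ A ∈ d.cutFms, qfree A = true) : CutFree Γ Δ (2 ^ (4 * d.size + 6)) := by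
  obtain ⟨s, h, hs⟩ := (d.tableau hd hc).exists_cutFree le_rfl
  rw [(side_map_append_map Γ Δ).1, (side_map_append_map Γ Δ).2] at h
  refine h.mono ?_
  have length_le : Γ.length + Δ.length ≤ 2 * 4 ^ d.size :=
    d.length_le.trans (Nat.mul_le_mul_left 2 (Nat.lt_pow_self (by norm_num)).le)
  rw [List.length_append, List.length_map, List.length_map] at hs
  calc s ≤ 2 * 4 ^ d.size * (5 * (Γ.length + Δ.length + 2 * 4 ^ d.size)) :=
        (Nat.le_add_right _ _).trans hs
    _ ≤ 2 * 4 ^ d.size * (5 * (2 * 4 ^ d.size + 2 * 4 ^ d.size)) := by gcongr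
    _ = 40 * 2 ^ (4 * d.size) := by
        rw [pow_mul, show (2 : ℕ) ^ 4 = 4 * 4 by norm_num, mul_pow]; ring
    _ ≤ 2 ^ (4 * d.size + 6) := by rw [pow_add]; omega

/-- cf. Weller. Every LK-proof with only propositional
(quantifier-free) cuts of a sequent `Γ ⊢ Δ` can be transformed into a cut-free
LK-proof of `Γ ⊢ Δ` whose size is at most double exponential in the size of
the original proof. -/
theorem propositional_cut_elimination :
    ∃ c : ℕ, ∀ (Γ Δ : List Fm) (d : Deriv Γ Δ), d.Std →
      (∀ A ∈ d.cutFms, qfree A = true) →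
      ∃ d' : Deriv Γ Δ,
        d'.Std ∧ d'.cutFms = [] ∧ d'.size ≤ 2 ^ 2 ^ (c * d.size + c) := by
  refine ⟨6, fun Γ Δ d hd hc => (propositional_cut_elimination_general d hd hc).mono ?_⟩
  have : 6 * d.size + 6 < 2 ^ (6 * d.size + 6) := Nat.lt_two_pow_self
  exact Nat.pow_le_pow_right Nat.two_pos (by omega)

end EpsCalc
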